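/- arXiv:1606.02959 — 4 statements merged into one kernel-verified Lean document; each statement's English description precedes it below -/
import Mathlib

section
/- For all natural numbers m, n and indices i, j with 0 ≤ i ≤ m and 0 ≤ j ≤ n, the integral of the product of two Bernstein polynomials over the unit interval satisfies ∫₀¹ B_i^m(t) · B_j^n(t) dt = C(m,i)·C(n,j) / [(m+n+1)·C(m+n,i+j)]. -/
lemma beta_nat_aux (b : ℕ) : ∀ a : ℕ,
    (∫ t in (0:ℝ)..1, t ^ a * (1 - t) ^ b) * ((a + b + 1).factorial : ℝ)
      = (a.factorial : ℝ) * (b.factorial : ℝ) := by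
  induction b with
  | zero =>
    intro a
    have h : ((a : ℝ) + 1) ≠ 0 := by positivity
    simp [integral_pow, Nat.factorial_succ]
    field_simp
  | succ b ih =>
    intro a
    have hI : ∀ c d : ℕ, IntervalIntegrable (fun t : ℝ => t ^ c * (1 - t) ^ d)
        MeasureTheory.volume 0 1 := fun c d =>
      Continuous.intervalIntegrable (by fun_prop) _ _
    have key : ∫ t in (0:ℝ)..1, (((a : ℝ) + 1) * (t ^ a * (1 - t) ^ (b + 1))
        - ((b : ℝ) + 1) * (t ^ (a + 1) * (1 - t) ^ b)) = 0 := by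
      rw [intervalIntegral.integral_eq_sub_of_hasDerivAt
        (f := fun t : ℝ => t ^ (a + 1) * (1 - t) ^ (b + 1))]
      · simp
      · intro x _
        have h1 : HasDerivAt (fun t : ℝ => t ^ (a + 1)) _ x := hasDerivAt_pow (a + 1) x
        have h2 : HasDerivAt (fun t : ℝ => (1 - t) ^ (b + 1)) _ x :=
          ((hasDerivAt_id x).const_sub 1).pow (b + 1)
        refine HasDerivAt.congr_deriv (h1.mul h2) ?_
        simp
        ring
      · exact ((hI _ _).const_mul _).sub ((hI _ _).const_mul _)
    rw [intervalIntegral.integral_sub ((hI _ _).const_mul _) ((hI _ _).const_mul _),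
      intervalIntegral.integral_const_mul, intervalIntegral.integral_const_mul] at key
    have h := ih (a + 1)
    rw [show a + 1 + b + 1 = a + (b + 1) + 1 by ring] at h
    have ha : ((a : ℝ) + 1) ≠ 0 := by positivity
    apply mul_left_cancel₀ ha
    rw [Nat.factorial_succ a] at h
    rw [Nat.factorial_succ b]
    push_cast at h ⊢
    linear_combination ((a + (b + 1) + 1).factorial : ℝ) * key + ((b : ℝ) + 1) * h


/-- The Bernstein polynomial `B_i^n(t) = C(n,i) t^i (1-t)^(n-i)`. -/
noncomputable def bern (n i : ℕ) (t : ℝ) : ℝ :=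
  (n.choose i : ℝ) * t ^ i * (1 - t) ^ (n - i)

/-- Integral of the product of two Bernstein polynomials over the unit interval:
`∫₀¹ B_i^m(t)·B_j^n(t) dt = C(m,i)·C(n,j)/[(m+n+1)·C(m+n,i+j)]`. -/
theorem bernstein_product_integral (m n i j : ℕ) (hi : i ≤ m) (hj : j ≤ n) :
    ∫ t in (0:ℝ)..1, bern m i t * bern n j t =
      (m.choose i : ℝ) * (n.choose j : ℝ) /
        (((m + n : ℕ) + 1 : ℝ) * ((m + n).choose (i + j) : ℝ)) := by
  have e : ∀ t : ℝ, bern m i t * bern n j t = ((m.choose i : ℝ) * (n.choose j : ℝ)) *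
      (t ^ (i + j) * (1 - t) ^ (m + n - (i + j))) := by
    intro t
    rw [show m + n - (i + j) = (m - i) + (n - j) by omega, pow_add, pow_add]
    unfold bern
    ring
  simp only [e]
  rw [intervalIntegral.integral_const_mul, div_eq_mul_inv]
  congr 1
  have hle : i + j ≤ m + n := by omega
  have h := beta_nat_aux (m + n - (i + j)) (i + j)
  rw [Nat.add_sub_cancel' hle, Nat.factorial_succ,
    ← Nat.choose_mul_factorial_mul_factorial hle] at h
  have h1 : ((i + j).factorial : ℝ) * ((m + n - (i + j)).factorial : ℝ) ≠ 0 := by positivity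
  apply eq_inv_of_mul_eq_one_left
  apply mul_right_cancel₀ h1
  rw [Nat.cast_mul, Nat.cast_mul, Nat.cast_mul, Nat.cast_succ] at h
  linear_combination h
end

section
/- Let R(u,v,w) = Σ_{i=0}^{l₁} Σ_{j=0}^{m₁} Σ_{k=0}^{n₁} a_{ijk} B_i^{l₁}(u) B_j^{m₁}(v) B_k^{n₁}(w) and S(u,v,w) = Σ_{i=0}^{l₂} Σ_{j=0}^{m₂} Σ_{k=0}^{n₂} b_{ijk} B_i^{l₂}(u) B_j^{m₂}(v) B_k^{n₂}(w) be trivariate Bézier functions with real coefficients a_{ijk}, b_{ijk}. Then their product satisfies R(u,v,w)·S(u,v,w) = Σ_{i=0}^{l₁+l₂} Σ_{j=0}^{m₁+m₂} Σ_{k=0}^{n₁+n₂} c_{ijk} B_i^{l₁+l₂}(u) B_j^{m₁+m₂}(v) B_k^{n₁+n₂}(w), where c_{ijk} = Σ_{r=max(0,i−l₂)}^{min(i,l₁)} Σ_{s=max(0,j−m₂)}^{min(j,m₁)} Σ_{t=max(0,k−n₂)}^{min(k,n₁)} [C(l₁,r)·C(l₂,i−r)·C(m₁,s)·C(m₂,j−s)·C(n₁,t)·C(n₂,k−t)]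 · a_{rst} · b_{(i−r),(j−s),(k−t)} / [C(l₁+l₂,i)·C(m₁+m₂,j)·C(n₁+n₂,k)]. -/
open Finset

lemma bez_reindex (p q : ℕ) (F : ℕ → ℕ → ℝ) :
    ∑ x ∈ range (p + 1), ∑ y ∈ range (q + 1), F x y =
      ∑ i ∈ range (p + q + 1), ∑ r ∈ Finset.Icc (i - q) (min i p), F r (i - r) := by
  rw [Finset.sum_sigma', Finset.sum_sigma']
  refine Finset.sum_bij' (fun x _ => ⟨x.1 + x.2, x.1⟩) (fun x _ => ⟨x.2, x.1 - x.2⟩) ?_ ?_ ?_ ?_ ?_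
  · rintro ⟨x, y⟩ h
    simp only [mem_sigma, mem_range, mem_Icc] at h ⊢
    omega
  · rintro ⟨x, y⟩ h
    simp only [mem_sigma, mem_range, mem_Icc] at h ⊢
    omega
  · rintro ⟨x, y⟩ h
    simp
  · rintro ⟨x, y⟩ h
    simp only [mem_sigma, mem_range, mem_Icc] at h
    have : y + (x - y) = x := by omega
    simp [this]
  · rintro ⟨x, y⟩ h
    simp

lemma bern_mul (p q i r : ℕ) (t : ℝ) (hi : i ∈ range (p + q + 1))
    (hr : r ∈ Finset.Icc (i - q) (min i p)) :
    bern p r t * bern q (i - r) t =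
      (p.choose r : ℝ) * (q.choose (i - r) : ℝ) / ((p + q).choose i : ℝ) * bern (p + q) i t := by
  simp only [mem_range, mem_Icc] at hi hr
  have hc : ((p + q).choose i : ℝ) ≠ 0 := by
    have := Nat.choose_pos (n := p + q) (k := i) (by omega)
    positivity
  have h1 : t ^ i = t ^ r * t ^ (i - r) := by
    rw [← pow_add]; congr 1; omega
  have h2 : (1 - t) ^ (p + q - i) = (1 - t) ^ (p - r) * (1 - t) ^ (q - (i - r)) := by
    rw [← pow_add]; congr 1; omega
  unfold bern
  rw [h1, h2]
  field_simp

/-- Product of two trivariate Bézier functions: the product of a trivariate Bézier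
function of degree `(l₁,m₁,n₁)` with coefficients `a` and one of degree `(l₂,m₂,n₂)`
with coefficients `b` is a trivariate Bézier function of degree `(l₁+l₂,m₁+m₂,n₁+n₂)`
with coefficients `c_{ijk}` given by the stated convolution formula.  (In `ℕ`,
`i - l₂` equals `max(0, i - l₂)`, so `Finset.Icc (i - l₂) (min i l₁)` is the index
range `max(0,i−l₂) ≤ r ≤ min(i,l₁)`.) -/
theorem trivariate_bezier_product (l₁ m₁ n₁ l₂ m₂ n₂ : ℕ)
    (a b : ℕ → ℕ → ℕ → ℝ) (u v w : ℝ) :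
    (∑ i ∈ range (l₁ + 1), ∑ j ∈ range (m₁ + 1), ∑ k ∈ range (n₁ + 1),
        a i j k * bern l₁ i u * bern m₁ j v * bern n₁ k w) *
      (∑ i ∈ range (l₂ + 1), ∑ j ∈ range (m₂ + 1), ∑ k ∈ range (n₂ + 1),
        b i j k * bern l₂ i u * bern m₂ j v * bern n₂ k w) =
    ∑ i ∈ range (l₁ + l₂ + 1), ∑ j ∈ range (m₁ + m₂ + 1), ∑ k ∈ range (n₁ + n₂ + 1),
      (∑ r ∈ Finset.Icc (i - l₂) (min i l₁), ∑ s ∈ Finset.Icc (j - m₂) (min j m₁),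
        ∑ t ∈ Finset.Icc (k - n₂) (min k n₁),
          ((l₁.choose r : ℝ) * (l₂.choose (i - r) : ℝ) * (m₁.choose s : ℝ) *
              (m₂.choose (j - s) : ℝ) * (n₁.choose t : ℝ) * (n₂.choose (k - t) : ℝ)) *
            a r s t * b (i - r) (j - s) (k - t) /
            (((l₁ + l₂).choose i : ℝ) * ((m₁ + m₂).choose j : ℝ) *
              ((n₁ + n₂).choose k : ℝ))) *
        bern (l₁ + l₂) i u * bern (m₁ + m₂) j v * bern (n₁ + n₂) k w := by
  simp_rw [Finset.sum_mul_sum]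
  rw [bez_reindex]
  refine Finset.sum_congr rfl fun i hi => ?_
  simp_rw [Finset.sum_mul]
  symm
  refine (Finset.sum_congr rfl fun j _ => Finset.sum_comm).trans (Finset.sum_comm.trans ?_)
  refine Finset.sum_congr rfl fun r hr => ?_
  refine Eq.trans ?_ (bez_reindex _ _ _).symm
  refine Finset.sum_congr rfl fun j hj => ?_
  refine Finset.sum_comm.trans ?_
  refine Finset.sum_congr rfl fun s hs => ?_
  refine Eq.trans ?_ (bez_reindex _ _ _).symm
  refine Finset.sum_congr rfl fun k hk => ?_
  refine Finset.sum_congr rfl fun t ht => ?_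
  symm
  calc _ = a r s t * b (i - r) (j - s) (k - t) * (bern l₁ r u * bern l₂ (i - r) u) *
        (bern m₁ s v * bern m₂ (j - s) v) * (bern n₁ t w * bern n₂ (k - t) w) := by ring
    _ = _ := by
      rw [bern_mul _ _ _ _ _ hi hr, bern_mul _ _ _ _ _ hj hs, bern_mul _ _ _ _ _ hk ht]
      simp only [div_eq_mul_inv, mul_inv]
      ring
end

section
/- Let l, m, n ≥ 1 and let S(u,v,w) = Σ_{i=0}^{l} Σ_{j=0}^{m} Σ_{k=0}^{n} P_{ijk} B_i^{l}(u) B_j^{m}(v) B_k^{n}(w) be a trivariate Bézier map with control points P_{ijk} ∈ ℝ³. Then the Jacobian determinant admits the Bernstein expansion J(u,v,w) = Σ_{i=0}^{3l−1} Σ_{j=0}^{3m−1} Σ_{k=0}^{3n−1} J_{ijk} B_i^{3l−1}(u) B_j^{3m−1}(v) B_k^{3n−1}(w), where J_{ijk} = Σ D_{i₁i₂i₃,j₁j₂j₃,k₁k₂k₃} · det(P_{(i₁+1),j₁,k₁} − P_{i₁,j₁,k₁}; P_{i₂,(j₂+1),k₂} − P_{i₂,j₂,k₂}; P_{i₃,j₃,(k₃+1)}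 − P_{i₃,j₃,k₃}), the sum running over all i₁+i₂+i₃ = i with i₁ ∈ [0,l−1], i₂, i₃ ∈ [0,l], all j₁+j₂+j₃ = j with j₁, j₃ ∈ [0,m], j₂ ∈ [0,m−1], and all k₁+k₂+k₃ = k with k₁, k₂ ∈ [0,n], k₃ ∈ [0,n−1], and where D_{i₁i₂i₃,j₁j₂j₃,k₁k₂k₃} = l·m·n · C(l−1,i₁)C(l,i₂)C(l,i₃)·C(m,j₁)C(m−1,j₂)C(m,j₃)·C(n,k₁)C(n,k₂)C(n−1,k₃) / [C(3l−1,i)·C(3m−1,j)·C(3n−1,k)]. -/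
open Finset

/-- The trivariate Bézier map of degree `(l,m,n)` with control points `P_{ijk} ∈ ℝ³`. -/
noncomputable def bezierMap (l m n : ℕ) (P : ℕ → ℕ → ℕ → (Fin 3 → ℝ))
    (u v w : ℝ) : Fin 3 → ℝ :=
  ∑ i ∈ range (l + 1), ∑ j ∈ range (m + 1), ∑ k ∈ range (n + 1),
    (bern l i u * bern m j v * bern n k w) • P i j k

/-- The Jacobian determinant of a trivariate Bézier map: the determinant of the 3×3
matrix whose rows are the partial derivatives `∂S/∂u`, `∂S/∂v`, `∂S/∂w`. -/
noncomputable def bezierJacobianDet (l m n : ℕ) (P : ℕ → ℕ → ℕ → (Fin 3 → ℝ))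
    (u v w : ℝ) : ℝ :=
  (Matrix.of
    ![deriv (fun u' : ℝ => bezierMap l m n P u' v w) u,
      deriv (fun v' : ℝ => bezierMap l m n P u v' w) v,
      deriv (fun w' : ℝ => bezierMap l m n P u v w') w]).det

/-- The coefficient `D_{i₁i₂i₃,j₁j₂j₃,k₁k₂k₃}` from Eq. (18). -/
noncomputable def Dcoef (l m n i j k i₁ i₂ i₃ j₁ j₂ j₃ k₁ k₂ k₃ : ℕ) : ℝ :=
  (l : ℝ) * (m : ℝ) * (n : ℝ) *
    (((l - 1).choose i₁ : ℝ) * (l.choose i₂ : ℝ) * (l.choose i₃ : ℝ) *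
      (m.choose j₁ : ℝ) * ((m - 1).choose j₂ : ℝ) * (m.choose j₃ : ℝ) *
      (n.choose k₁ : ℝ) * (n.choose k₂ : ℝ) * ((n - 1).choose k₃ : ℝ)) /
    (((3 * l - 1).choose i : ℝ) * ((3 * m - 1).choose j : ℝ) * ((3 * n - 1).choose k : ℝ))

/-- The Bernstein coefficient `J_{ijk}` of the Jacobian determinant: the sum over all
`i₁+i₂+i₃ = i` with `i₁ ∈ [0,l−1]`, `i₂,i₃ ∈ [0,l]`, all `j₁+j₂+j₃ = j` with
`j₁,j₃ ∈ [0,m]`, `j₂ ∈ [0,m−1]`, and all `k₁+k₂+k₃ = k` with `k₁,k₂ ∈ [0,n]`,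
`k₃ ∈ [0,n−1]`, of `D · det(ΔP-rows)`. -/
noncomputable def Jcoef (l m n : ℕ) (P : ℕ → ℕ → ℕ → (Fin 3 → ℝ)) (i j k : ℕ) : ℝ :=
  ∑ i₁ ∈ range l, ∑ i₂ ∈ range (l + 1), ∑ i₃ ∈ range (l + 1),
    ∑ j₁ ∈ range (m + 1), ∑ j₂ ∈ range m, ∑ j₃ ∈ range (m + 1),
      ∑ k₁ ∈ range (n + 1), ∑ k₂ ∈ range (n + 1), ∑ k₃ ∈ range n,
        if i₁ + i₂ + i₃ = i ∧ j₁ + j₂ + j₃ = j ∧ k₁ + k₂ + k₃ = k then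
          Dcoef l m n i j k i₁ i₂ i₃ j₁ j₂ j₃ k₁ k₂ k₃ *
            (Matrix.of
              ![P (i₁ + 1) j₁ k₁ - P i₁ j₁ k₁,
                P i₂ (j₂ + 1) k₂ - P i₂ j₂ k₂,
                P i₃ j₃ (k₃ + 1) - P i₃ j₃ k₃]).det
        else 0

theorem hasDerivAt_bern_zero (L : ℕ) (u : ℝ) :
    HasDerivAt (bern (L + 1) 0) (-((L + 1 : ℝ) * bern L 0 u)) u := by
  have h : HasDerivAt (fun t : ℝ => (1 - t) ^ (L + 1)) (((L + 1 : ℕ) : ℝ) * (1 - u) ^ L * (-1)) u := by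
    simpa using ((hasDerivAt_id u).const_sub 1).fun_pow (L + 1)
  have e : bern (L + 1) 0 = fun t : ℝ => (1 - t) ^ (L + 1) := by
    funext t; simp [bern]
  rw [e]
  refine h.congr_deriv ?_
  simp [bern]

theorem hasDerivAt_bern_succ (L i : ℕ) (u : ℝ) :
    HasDerivAt (bern (L + 1) (i + 1)) ((L + 1 : ℝ) * (bern L i u - bern L (i + 1) u)) u := by
  have h1 : HasDerivAt (fun t : ℝ => t ^ (i + 1)) (((i + 1 : ℕ) : ℝ) * u ^ i) u := by
    simpa using (hasDerivAt_id u).fun_pow (i + 1)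
  have h2 : HasDerivAt (fun t : ℝ => (1 - t) ^ (L - i))
      (((L - i : ℕ) : ℝ) * (1 - u) ^ (L - i - 1) * (-1)) u := by
    simpa using ((hasDerivAt_id u).const_sub 1).fun_pow (L - i)
  have h := (h1.const_mul (((L + 1).choose (i + 1) : ℕ) : ℝ)).mul h2
  have e : bern (L + 1) (i + 1) = (fun t : ℝ => (((L + 1).choose (i + 1) : ℕ) : ℝ) * t ^ (i + 1))
      * (fun t : ℝ => (1 - t) ^ (L - i)) := by
    funext t; simp [bern]
  rw [e]
  refine h.congr_deriv ?_
  have c1 : ((L + 1 : ℕ) : ℝ) * (L.choose i : ℝ) = ((L + 1).choose (i + 1) : ℝ) * ((i + 1 : ℕ) : ℝ) := by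
    exact_mod_cast Nat.add_one_mul_choose_eq L i
  have c2 : ((L.choose (i + 1) : ℕ) : ℝ) * ((i + 1 : ℕ) : ℝ) = (L.choose i : ℝ) * ((L - i : ℕ) : ℝ) := by
    exact_mod_cast Nat.choose_succ_right_eq L i
  have c3 : ((L + 1 : ℕ) : ℝ) * (L.choose (i + 1) : ℝ)
      = ((L + 1).choose (i + 1) : ℝ) * ((L - i : ℕ) : ℝ) := by
    have hi : ((i + 1 : ℕ) : ℝ) ≠ 0 := by positivity
    apply mul_right_cancel₀ hi
    linear_combination ((L + 1 : ℕ) : ℝ) * c2 + ((L - i : ℕ) : ℝ) * c1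
  have e2 : L - i - 1 = L - (i + 1) := by omega
  simp only [bern, e2]
  push_cast at c1 c3 ⊢
  linear_combination -(u ^ i * (1 - u) ^ (L - i)) * c1 + (u ^ (i + 1) * (1 - u) ^ (L - (i + 1))) * c3

theorem deriv_bezier_curve (l : ℕ) (hl : 1 ≤ l) (Q : ℕ → Fin 3 → ℝ) (u : ℝ) :
    deriv (fun t : ℝ => ∑ i ∈ range (l + 1), bern l i t • Q i) u
      = ∑ i ∈ range l, ((l : ℝ) * bern (l - 1) i u) • (Q (i + 1) - Q i) := by
  obtain ⟨L, rfl⟩ : ∃ L, l = L + 1 := ⟨l - 1, by omega⟩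
  apply HasDerivAt.deriv
  have h : HasDerivAt (fun t : ℝ => ∑ i ∈ range (L + 1 + 1), bern (L + 1) i t • Q i)
      (∑ i ∈ range (L + 1), ((L + 1 : ℝ) * (bern L i u - bern L (i + 1) u)) • Q (i + 1)
        + (-((L + 1 : ℝ) * bern L 0 u)) • Q 0) u := by
    simp only [Finset.sum_range_succ' _ (L + 1)]
    refine HasDerivAt.fun_add (HasDerivAt.fun_sum fun i _ => ?_) ?_
    · exact (hasDerivAt_bern_succ L i u).smul_const _
    · exact (hasDerivAt_bern_zero L u).smul_const _
  refine h.congr_deriv ?_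
  have hz : bern L (L + 1) u = 0 := by simp [bern]
  have key : ∑ i ∈ range (L + 1), ((L + 1 : ℝ) * bern L i u) • Q i
      = ∑ i ∈ range (L + 1), ((L + 1 : ℝ) * bern L (i + 1) u) • Q (i + 1)
        + ((L + 1 : ℝ) * bern L 0 u) • Q 0 := by
    rw [← Finset.sum_range_succ' (fun i => ((L + 1 : ℝ) * bern L i u) • Q i) (L + 1),
      Finset.sum_range_succ _ (L + 1), hz]
    simp
  simp only [Nat.add_sub_cancel, smul_sub, mul_sub, sub_smul, Finset.sum_sub_distrib, neg_smul]
  push_cast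
  rw [key]
  abel

/-- The determinant as a function of its rows. -/
noncomputable def rowDet (x y z : Fin 3 → ℝ) : ℝ := (Matrix.of ![x, y, z]).det

theorem rowDet_sum {ι κ τ : Type*} (A : Finset ι) (B : Finset κ) (C : Finset τ)
    (a : ι → ℝ) (b : κ → ℝ) (c : τ → ℝ) (x : ι → Fin 3 → ℝ) (y : κ → Fin 3 → ℝ)
    (z : τ → Fin 3 → ℝ) :
    rowDet (∑ i ∈ A, a i • x i) (∑ j ∈ B, b j • y j) (∑ k ∈ C, c k • z k)
      = ∑ i ∈ A, ∑ j ∈ B, ∑ k ∈ C, (a i * b j * c k) * rowDet (x i) (y j) (z k) := by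
  have h1 : ∀ Y Z, rowDet (∑ i ∈ A, a i • x i) Y Z = ∑ i ∈ A, a i * rowDet (x i) Y Z := by
    intro Y Z
    let f : (Fin 3 → ℝ) →ₗ[ℝ] ℝ :=
      { toFun := fun X => rowDet X Y Z
        map_add' := by intro p q; simp [rowDet, Matrix.det_fin_three]; ring
        map_smul' := by intro p q; simp [rowDet, Matrix.det_fin_three]; ring }
    have := map_sum f (fun i => a i • x i) A
    simp only [map_smul, smul_eq_mul] at this
    exact this
  have h2 : ∀ X Z, rowDet X (∑ i ∈ B, b i • y i) Z = ∑ i ∈ B, b i * rowDet X (y i) Z := by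
    intro Y Z
    let f : (Fin 3 → ℝ) →ₗ[ℝ] ℝ :=
      { toFun := fun X => rowDet Y X Z
        map_add' := by intro p q; simp [rowDet, Matrix.det_fin_three]; ring
        map_smul' := by intro p q; simp [rowDet, Matrix.det_fin_three]; ring }
    have := map_sum f (fun i => b i • y i) B
    simp only [map_smul, smul_eq_mul] at this
    exact this
  have h3 : ∀ X Y, rowDet X Y (∑ i ∈ C, c i • z i) = ∑ i ∈ C, c i * rowDet X Y (z i) := by
    intro Y Z
    let f : (Fin 3 → ℝ) →ₗ[ℝ] ℝ :=
      { toFun := fun X => rowDet Y Z X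
        map_add' := by intro p q; simp [rowDet, Matrix.det_fin_three]; ring
        map_smul' := by intro p q; simp [rowDet, Matrix.det_fin_three]; ring }
    have := map_sum f (fun i => c i • z i) C
    simp only [map_smul, smul_eq_mul] at this
    exact this
  simp only [h1, h2, h3, Finset.mul_sum]
  refine sum_congr rfl fun i _ => sum_congr rfl fun j _ => sum_congr rfl fun k _ => ?_
  ring

theorem deriv_u (l m n : ℕ) (hl : 1 ≤ l) (P : ℕ → ℕ → ℕ → (Fin 3 → ℝ)) (u v w : ℝ) :
    deriv (fun t : ℝ => bezierMap l m n P t v w) u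
      = ∑ a ∈ range l ×ˢ range (m + 1) ×ˢ range (n + 1),
        ((l : ℝ) * bern (l - 1) a.1 u * bern m a.2.1 v * bern n a.2.2 w) •
          (P (a.1 + 1) a.2.1 a.2.2 - P a.1 a.2.1 a.2.2) := by
  have e : (fun t : ℝ => bezierMap l m n P t v w) = fun t => ∑ i ∈ range (l + 1), bern l i t •
      (∑ j ∈ range (m + 1), ∑ k ∈ range (n + 1), (bern m j v * bern n k w) • P i j k) := by
    funext t
    simp only [bezierMap, smul_sum, smul_smul, mul_assoc]
  rw [e, deriv_bezier_curve l hl]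
  simp only [sum_product, ← sum_sub_distrib, smul_sum, ← smul_sub, smul_smul, mul_assoc]

theorem deriv_v (l m n : ℕ) (hm : 1 ≤ m) (P : ℕ → ℕ → ℕ → (Fin 3 → ℝ)) (u v w : ℝ) :
    deriv (fun t : ℝ => bezierMap l m n P u t w) v
      = ∑ a ∈ range (l + 1) ×ˢ range m ×ˢ range (n + 1),
        (bern l a.1 u * ((m : ℝ) * bern (m - 1) a.2.1 v) * bern n a.2.2 w) •
          (P a.1 (a.2.1 + 1) a.2.2 - P a.1 a.2.1 a.2.2) := by
  have e : (fun t : ℝ => bezierMap l m n P u t w) = fun t => ∑ j ∈ range (m + 1), bern m j t •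
      (∑ i ∈ range (l + 1), ∑ k ∈ range (n + 1), (bern l i u * bern n k w) • P i j k) := by
    funext t
    simp only [bezierMap, smul_sum, smul_smul]
    rw [sum_comm]
    refine sum_congr rfl fun i _ => sum_congr rfl fun j _ => sum_congr rfl fun k _ => ?_
    congr 1; ring
  rw [e, deriv_bezier_curve m hm]
  simp only [sum_product, ← sum_sub_distrib, smul_sum, ← smul_sub, smul_smul]
  rw [sum_comm]
  refine sum_congr rfl fun i _ => sum_congr rfl fun j _ => sum_congr rfl fun k _ => ?_
  congr 1; ring

theorem deriv_w (l m n : ℕ) (hn : 1 ≤ n) (P : ℕ → ℕ → ℕ → (Fin 3 → ℝ)) (u v w : ℝ) :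
    deriv (fun t : ℝ => bezierMap l m n P u v t) w
      = ∑ a ∈ range (l + 1) ×ˢ range (m + 1) ×ˢ range n,
        (bern l a.1 u * bern m a.2.1 v * ((n : ℝ) * bern (n - 1) a.2.2 w)) •
          (P a.1 a.2.1 (a.2.2 + 1) - P a.1 a.2.1 a.2.2) := by
  have e : (fun t : ℝ => bezierMap l m n P u v t) = fun t => ∑ k ∈ range (n + 1), bern n k t •
      (∑ a ∈ range (l + 1) ×ˢ range (m + 1), (bern l a.1 u * bern m a.2 v) • P a.1 a.2 k) := by
    funext t
    simp only [bezierMap, smul_sum, smul_smul]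
    rw [sum_comm (s := range (n + 1))]
    simp only [sum_product]
    refine sum_congr rfl fun i _ => sum_congr rfl fun j _ => sum_congr rfl fun k _ => ?_
    congr 1; ring
  rw [e, deriv_bezier_curve n hn]
  simp only [← sum_sub_distrib, smul_sum, ← smul_sub, smul_smul]
  rw [sum_comm]
  simp only [sum_product]
  refine sum_congr rfl fun i _ => sum_congr rfl fun j _ => sum_congr rfl fun k _ => ?_
  congr 1; ring

/-- Product of three Bernstein polynomials of degrees `l - 1`, `l`, `l`. -/
theorem bern_prod (l a b c : ℕ) (ha : a < l) (hb : b < l + 1) (hc : c < l + 1) (t : ℝ) :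
    bern (l - 1) a t * bern l b t * bern l c t
      = ((l - 1).choose a : ℝ) * (l.choose b : ℝ) * (l.choose c : ℝ) /
        ((3 * l - 1).choose (a + b + c) : ℝ) * bern (3 * l - 1) (a + b + c) t := by
  have h : ((3 * l - 1).choose (a + b + c) : ℝ) ≠ 0 := by
    exact_mod_cast (Nat.choose_pos (by omega)).ne'
  have e : 3 * l - 1 - (a + b + c) = (l - 1 - a) + (l - b) + (l - c) := by omega
  simp only [bern, e, pow_add]
  generalize ((3 * l - 1).choose (a + b + c) : ℝ) = N at *
  generalize ((l - 1).choose a : ℝ) = c₁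
  generalize (l.choose b : ℝ) = c₂
  generalize (l.choose c : ℝ) = c₃
  generalize (1 - t) ^ (l - 1 - a) = x₁
  generalize (1 - t) ^ (l - b) = x₂
  generalize (1 - t) ^ (l - c) = x₃
  rw [div_mul_eq_mul_div, eq_div_iff h]
  ring

/-- Reordering of a nine-fold sum. -/
theorem sum_reorder (A₁ A₂ A₃ B₁ B₂ B₃ C₁ C₂ C₃ : Finset ℕ)
    (F : ℕ → ℕ → ℕ → ℕ → ℕ → ℕ → ℕ → ℕ → ℕ → ℝ) :
    ∑ a ∈ A₁ ×ˢ B₁ ×ˢ C₁, ∑ b ∈ A₂ ×ˢ B₂ ×ˢ C₂, ∑ c ∈ A₃ ×ˢ B₃ ×ˢ C₃,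
      F a.1 b.1 c.1 a.2.1 b.2.1 c.2.1 a.2.2 b.2.2 c.2.2
    = ∑ p ∈ A₁ ×ˢ A₂ ×ˢ A₃, ∑ q ∈ B₁ ×ˢ B₂ ×ˢ B₃, ∑ r ∈ C₁ ×ˢ C₂ ×ˢ C₃,
      F p.1 p.2.1 p.2.2 q.1 q.2.1 q.2.2 r.1 r.2.1 r.2.2 := by
  simp only [← sum_product']
  refine sum_nbij'
    (fun x => ((x.1.1, x.2.1.1, x.2.2.1), (x.1.2.1, x.2.1.2.1, x.2.2.2.1),
      (x.1.2.2, x.2.1.2.2, x.2.2.2.2)))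
    (fun x => ((x.1.1, x.2.1.1, x.2.2.1), (x.1.2.1, x.2.1.2.1, x.2.2.2.1),
      (x.1.2.2, x.2.1.2.2, x.2.2.2.2))) ?_ ?_ ?_ ?_ ?_
  · intro x; simp only [mem_product]; tauto
  · intro x; simp only [mem_product]; tauto
  · intro x _; rfl
  · intro x _; rfl
  · intro x _; rfl

theorem Jcoef_eq (l m n : ℕ) (P : ℕ → ℕ → ℕ → (Fin 3 → ℝ)) (i j k : ℕ) :
    Jcoef l m n P i j k =
      ∑ p ∈ range l ×ˢ range (l + 1) ×ˢ range (l + 1),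
        ∑ q ∈ range (m + 1) ×ˢ range m ×ˢ range (m + 1),
          ∑ r ∈ range (n + 1) ×ˢ range (n + 1) ×ˢ range n,
        if p.1 + p.2.1 + p.2.2 = i then if q.1 + q.2.1 + q.2.2 = j then
          if r.1 + r.2.1 + r.2.2 = k then
          Dcoef l m n i j k p.1 p.2.1 p.2.2 q.1 q.2.1 q.2.2 r.1 r.2.1 r.2.2 *
            rowDet (P (p.1 + 1) q.1 r.1 - P p.1 q.1 r.1)
              (P p.2.1 (q.2.1 + 1) r.2.1 - P p.2.1 q.2.1 r.2.1)
              (P p.2.2 q.2.2 (r.2.2 + 1) - P p.2.2 q.2.2 r.2.2)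
          else 0 else 0 else 0 := by
  simp only [Jcoef, sum_product, ite_and, rowDet]

/-- Bernstein expansion of the Jacobian determinant of a trivariate Bézier map:
`J(u,v,w) = Σ_{i=0}^{3l−1} Σ_{j=0}^{3m−1} Σ_{k=0}^{3n−1} J_{ijk} B_i^{3l−1}(u) B_j^{3m−1}(v) B_k^{3n−1}(w)`
with the explicit coefficients `J_{ijk}` above. -/
theorem bezier_jacobian_det_expansion (l m n : ℕ) (hl : 1 ≤ l) (hm : 1 ≤ m)
    (hn : 1 ≤ n) (P : ℕ → ℕ → ℕ → (Fin 3 → ℝ)) (u v w : ℝ) :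
    bezierJacobianDet l m n P u v w =
      ∑ i ∈ range (3 * l), ∑ j ∈ range (3 * m), ∑ k ∈ range (3 * n),
        Jcoef l m n P i j k *
          bern (3 * l - 1) i u * bern (3 * m - 1) j v * bern (3 * n - 1) k w := by
  unfold bezierJacobianDet
  rw [deriv_u l m n hl, deriv_v l m n hm, deriv_w l m n hn]
  refine (rowDet_sum _ _ _ _ _ _ _ _ _).trans ?_
  refine (sum_reorder _ _ _ _ _ _ _ _ _
    (fun i₁ i₂ i₃ j₁ j₂ j₃ k₁ k₂ k₃ =>
      ((l : ℝ) * bern (l - 1) i₁ u * bern m j₁ v * bern n k₁ w *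
        (bern l i₂ u * ((m : ℝ) * bern (m - 1) j₂ v) * bern n k₂ w) *
        (bern l i₃ u * bern m j₃ v * ((n : ℝ) * bern (n - 1) k₃ w))) *
      rowDet (P (i₁ + 1) j₁ k₁ - P i₁ j₁ k₁) (P i₂ (j₂ + 1) k₂ - P i₂ j₂ k₂)
        (P i₃ j₃ (k₃ + 1) - P i₃ j₃ k₃))).trans ?_
  have e : ∀ i j k, Jcoef l m n P i j k *
          bern (3 * l - 1) i u * bern (3 * m - 1) j v * bern (3 * n - 1) k w
      = ∑ x ∈ ((range l ×ˢ range (l + 1) ×ˢ range (l + 1)) ×ˢ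
          (range (m + 1) ×ˢ range m ×ˢ range (m + 1))) ×ˢ
          (range (n + 1) ×ˢ range (n + 1) ×ˢ range n),
        if x.1.1.1 + x.1.1.2.1 + x.1.1.2.2 = i then if x.1.2.1 + x.1.2.2.1 + x.1.2.2.2 = j then
          if x.2.1 + x.2.2.1 + x.2.2.2 = k then
          Dcoef l m n i j k x.1.1.1 x.1.1.2.1 x.1.1.2.2 x.1.2.1 x.1.2.2.1 x.1.2.2.2
              x.2.1 x.2.2.1 x.2.2.2 *
            rowDet (P (x.1.1.1 + 1) x.1.2.1 x.2.1 - P x.1.1.1 x.1.2.1 x.2.1)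
              (P x.1.1.2.1 (x.1.2.2.1 + 1) x.2.2.1 - P x.1.1.2.1 x.1.2.2.1 x.2.2.1)
              (P x.1.1.2.2 x.1.2.2.2 (x.2.2.2 + 1) - P x.1.1.2.2 x.1.2.2.2 x.2.2.2) *
            bern (3 * l - 1) i u * bern (3 * m - 1) j v * bern (3 * n - 1) k w
          else 0 else 0 else 0 := by
    intro i j k
    rw [Jcoef_eq, ← sum_product', ← sum_product', sum_mul, sum_mul, sum_mul]
    refine sum_congr rfl fun x _ => ?_
    split_ifs <;> simp
  simp only [e]
  rw [← sum_product', ← sum_product', ← sum_product', ← sum_product', sum_comm]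
  refine sum_congr rfl fun x hx => ?_
  obtain ⟨⟨⟨i₁, i₂, i₃⟩, ⟨j₁, j₂, j₃⟩⟩, ⟨k₁, k₂, k₃⟩⟩ := x
  simp only [mem_product, mem_range] at hx
  obtain ⟨⟨⟨hi₁, hi₂, hi₃⟩, ⟨hj₁, hj₂, hj₃⟩⟩, ⟨hk₁, hk₂, hk₃⟩⟩ := hx
  have hi : i₁ + i₂ + i₃ < 3 * l := by omega
  have hj : j₁ + j₂ + j₃ < 3 * m := by omega
  have hk : k₁ + k₂ + k₃ < 3 * n := by omega
  simp only [sum_product]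
  rw [sum_eq_single_of_mem (i₁ + i₂ + i₃) (mem_range.2 hi)
      (fun b _ hb => by simp [hb.symm]),
    sum_eq_single_of_mem (j₁ + j₂ + j₃) (mem_range.2 hj)
      (fun b _ hb => by simp [hb.symm]),
    sum_eq_single_of_mem (k₁ + k₂ + k₃) (mem_range.2 hk)
      (fun b _ hb => by simp [hb.symm])]
  simp only [if_true]
  have hu := bern_prod l i₁ i₂ i₃ hi₁ hi₂ hi₃ u
  have hv := bern_prod m j₂ j₁ j₃ hj₂ hj₁ hj₃ v
  have hw := bern_prod n k₃ k₁ k₂ hk₃ hk₁ hk₂ w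
  rw [show j₂ + j₁ + j₃ = j₁ + j₂ + j₃ by omega] at hv
  rw [show k₃ + k₁ + k₂ = k₁ + k₂ + k₃ by omega] at hw
  generalize rowDet _ _ _ = d
  calc _ = (l : ℝ) * m * n * d * (bern (l - 1) i₁ u * bern l i₂ u * bern l i₃ u) *
        (bern (m - 1) j₂ v * bern m j₁ v * bern m j₃ v) *
        (bern (n - 1) k₃ w * bern n k₁ w * bern n k₂ w) := by ring
    _ = _ := by
      rw [hu, hv, hw, Dcoef]
      ring
end

section
/- Let λ > 0 and define f : ℝ³ → ℝ by f(x) = (max(0, 1 − ‖x‖/λ))⁶ · (3 + 18·(‖x‖/λ) + 35·(‖x‖/λ)²), where ‖·‖ is the Euclidean norm. Then f is four times continuously differentiable on ℝ³ (i.e., f is of class C⁴), and f(x) = 0 whenever ‖x‖ ≥ λ, so the support of f is contained in the closed ball of radius λ centered at the origin. -/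
/-- A positively homogeneous function of degree `n + 1` which is `C^n` off the origin is `C^n`. -/
theorem homog_contDiff {E : Type} [NormedAddCommGroup E] [NormedSpace ℝ E]
    [FiniteDimensional ℝ E] (n : ℕ) : ∀ {F : Type} [NormedAddCommGroup F] [NormedSpace ℝ F]
    (f : E → F) (_ : ∀ x, x ≠ 0 → ContDiffAt ℝ n f x)
    (_ : ∀ (t : ℝ), 0 < t → ∀ x, f (t • x) = t ^ (n + 1) • f x), ContDiff ℝ n f := by
  have bound : ∀ (n : ℕ) {F : Type} [NormedAddCommGroup F] [NormedSpace ℝ F]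
      (f : E → F) (_ : ∀ x, x ≠ 0 → ContinuousAt f x)
      (_ : ∀ (t : ℝ), 0 < t → ∀ x, f (t • x) = t ^ (n + 1) • f x),
      f 0 = 0 ∧ ∃ C, ∀ x, ‖f x‖ ≤ C * ‖x‖ ^ (n + 1) := by
    intro n F _ _ f hc hh
    have h0 : f 0 = 0 := by
      have h := hh 2 (by norm_num) 0
      rw [smul_zero] at h
      have h2 : ((2 : ℝ) ^ (n + 1) - 1) • f 0 = 0 := by
        rw [sub_smul, one_smul, ← h, sub_self]
      rcases smul_eq_zero.1 h2 with h3 | h3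
      · have : (1 : ℝ) < 2 ^ (n + 1) := one_lt_pow₀ (by norm_num) (by simp)
        linarith
      · exact h3
    refine ⟨h0, ?_⟩
    obtain ⟨C, hC⟩ := (isCompact_sphere (0 : E) 1).exists_bound_of_continuousOn (f := f) (by
      intro x hx
      exact (hc x (by rintro rfl; simp at hx)).continuousWithinAt)
    refine ⟨C, fun x => ?_⟩
    by_cases hx : x = 0
    · simp [hx, h0]
    · have hp : 0 < ‖x‖ := norm_pos_iff.2 hx
      have h1 := hh ‖x‖ hp (‖x‖⁻¹ • x)
      rw [smul_smul, mul_inv_cancel₀ hp.ne', one_smul] at h1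
      rw [h1, norm_smul, norm_pow, norm_norm, mul_comm]
      have := hC (‖x‖⁻¹ • x) (by simp [norm_smul, hp.ne'])
      gcongr
  induction n with
  | zero =>
    intro F _ _ f hf hh
    obtain ⟨h0, C, hC⟩ := bound 0 f (fun x hx => (hf x hx).continuousAt) hh
    refine contDiff_zero.2 (continuous_iff_continuousAt.2 fun x => ?_)
    by_cases hx : x = 0
    · subst hx
      rw [ContinuousAt, h0]
      refine squeeze_zero_norm hC ?_
      have : Continuous fun x : E => C * ‖x‖ ^ (0 + 1) := by fun_prop
      simpa using this.tendsto 0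
    · exact (hf x hx).continuousAt
  | succ n ih =>
    intro F _ _ f hf hh
    obtain ⟨h0, C, hC⟩ := bound (n + 1) f (fun x hx => (hf x hx).continuousAt) hh
    push_cast
    rw [contDiff_succ_iff_fderiv]
    refine ⟨fun x => ?_, by simp, ?_⟩
    · by_cases hx : x = 0
      · subst hx
        have : HasFDerivAt f (0 : E →L[ℝ] F) 0 := by
          rw [hasFDerivAt_iff_isLittleO_nhds_zero]
          simp only [zero_add, h0, sub_zero, zero_apply]
          have h1 : f =O[nhds 0] fun x : E => ‖x‖ ^ (n + 1 + 1) :=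
            Asymptotics.IsBigO.of_bound C (Filter.Eventually.of_forall fun x => by
              simpa using hC x)
          exact h1.trans_isLittleO (Asymptotics.isLittleO_norm_pow_id (by omega))
        exact this.differentiableAt
      · exact (hf x hx).differentiableAt (by simp)
    · apply ih
      · intro x hx
        exact (hf x hx).fderiv_right (by simp)
      · intro t ht x
        have h1 := fderiv_comp_smul (𝕜 := ℝ) (f := f) (x := x) t
        have h2 : (fun x => f (t • x)) = fun x => t ^ (n + 1 + 1) • f x := funext (hh t ht)
        have h3 : fderiv ℝ (fun x => t ^ (n + 1 + 1) • f x) x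
            = t ^ (n + 1 + 1) • fderiv ℝ f x := by
          have := congrFun (fderiv_const_smul_field (𝕜 := ℝ) (f := f) (t ^ (n + 1 + 1))) x
          exact this
        rw [h2, h3, pow_succ', mul_smul] at h1
        exact (smul_right_injective _ ht.ne' h1).symm

/-- Wendland's compactly supported radial basis function
`φ(r) = (1−r)₊⁶ (3 + 18r + 35r²)` at `r = ‖x‖/λ` is of class `C⁴` on `ℝ³`, vanishes
whenever `‖x‖ ≥ λ`, and its support is contained in the closed ball of radius `λ`
centered at the origin. -/
theorem wendland_csrbf_c4_compact_support (lam : ℝ) (hlam : 0 < lam)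
    (f : EuclideanSpace ℝ (Fin 3) → ℝ)
    (hf : ∀ x : EuclideanSpace ℝ (Fin 3),
      f x = (max 0 (1 - ‖x‖ / lam)) ^ 6 *
        (3 + 18 * (‖x‖ / lam) + 35 * (‖x‖ / lam) ^ 2)) :
    ContDiff ℝ 4 f ∧
    (∀ x : EuclideanSpace ℝ (Fin 3), lam ≤ ‖x‖ → f x = 0) ∧
    tsupport f ⊆ Metric.closedBall 0 lam := by
  have hz : ∀ x : EuclideanSpace ℝ (Fin 3), lam ≤ ‖x‖ → f x = 0 := by
    intro x hx
    have : 1 ≤ ‖x‖ / lam := (one_le_div hlam).2 hx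
    rw [hf, max_eq_left (by linarith)]
    simp
  refine ⟨?_, hz, ?_⟩
  · have hn5 : ContDiff ℝ 4 (fun x : EuclideanSpace ℝ (Fin 3) => ‖x‖ ^ 5) := by
      refine homog_contDiff 4 _ (fun x hx => (contDiffAt_norm ℝ hx).pow 5) ?_
      intro t ht x
      simp [norm_smul, abs_of_pos ht, mul_pow]
    have hm : ContDiff ℝ 4 (fun t : ℝ => (max 0 t) ^ 6) := by
      have : ContDiff ℝ (5 : ℕ) (fun t : ℝ => (max 0 t) ^ 6) := by
        refine homog_contDiff 5 _ (fun x hx => ?_) ?_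
        · rcases lt_or_gt_of_ne hx with h | h
          · refine (contDiffAt_const (c := (0 : ℝ))).congr_of_eventuallyEq ?_
            filter_upwards [gt_mem_nhds h] with y hy
            simp [max_eq_left hy.le]
          · refine (contDiffAt_id.pow 6).congr_of_eventuallyEq ?_
            filter_upwards [lt_mem_nhds h] with y hy
            simp [max_eq_right hy.le]
        · intro t ht x
          have : max 0 (t • x) = t * max 0 x := by
            rw [mul_max_of_nonneg _ _ ht.le]; simp
          rw [this, mul_pow, smul_eq_mul]
      exact this.of_le (by norm_cast)
    have hfe : f = fun x => (max 0 (1 - ‖x‖ / lam)) ^ 6 *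
        (3 + 18 * (‖x‖ / lam) + 35 * (‖x‖ / lam) ^ 2) := funext hf
    rw [contDiff_iff_contDiffAt]
    intro x
    by_cases hx : x = 0
    · subst hx
      have h2 : ContDiff ℝ 4 (fun x : EuclideanSpace ℝ (Fin 3) => ‖x‖ ^ 2) := contDiff_norm_sq ℝ
      have hp : ContDiff ℝ 4 (fun x : EuclideanSpace ℝ (Fin 3) =>
          3 - 28 / lam ^ 2 * ‖x‖ ^ 2 + 210 / lam ^ 4 * (‖x‖ ^ 2) ^ 2 - 448 / lam ^ 5 * ‖x‖ ^ 5
            + 420 / lam ^ 6 * (‖x‖ ^ 2) ^ 3 - 192 / lam ^ 7 * (‖x‖ ^ 5 * ‖x‖ ^ 2)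
            + 35 / lam ^ 8 * (‖x‖ ^ 2) ^ 4) :=
        (((((contDiff_const.sub (contDiff_const.mul h2)).add
          (contDiff_const.mul (h2.pow 2))).sub (contDiff_const.mul hn5)).add
          (contDiff_const.mul (h2.pow 3))).sub (contDiff_const.mul (hn5.mul h2))).add
          (contDiff_const.mul (h2.pow 4))
      refine hp.contDiffAt.congr_of_eventuallyEq ?_
      filter_upwards [Metric.ball_mem_nhds 0 hlam] with y hy
      have hy' : ‖y‖ < lam := by simpa using hy
      have : ‖y‖ / lam < 1 := (div_lt_one hlam).2 hy'
      rw [hf, max_eq_right (by linarith)]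
      field_simp
      ring
    · have hN : ContDiffAt ℝ 4 (fun x : EuclideanSpace ℝ (Fin 3) => ‖x‖ / lam) x :=
        (contDiffAt_norm ℝ hx).div_const lam
      rw [hfe]
      have h1 := hm.contDiffAt.comp x ((contDiffAt_const (c := (1 : ℝ))).sub hN)
      exact h1.mul ((contDiffAt_const.add (contDiffAt_const.mul hN)).add
        (contDiffAt_const.mul (hN.pow 2)))
  · refine closure_minimal (fun x hx => ?_) Metric.isClosed_closedBall
    by_contra h
    have : lam < ‖x‖ := by simpa using h
    exact hx (hz x this.le)
end
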